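/- arXiv:1507.01143 — 2 statements merged into one kernel-verified Lean document; each statement's English description precedes it below -/
import Mathlib

section
/- There is a universal constant C > 0 such that for every s ≥ 2 and every sufficiently smooth function u defined in K_{[2,∞)} and spatially compactly supported in K: sup_{(t,x) ∈ H_s} (s + |x|)^{3/2} |u(t,x)| ≤ C Σ_{|I| ≤ 2} ‖L^I u‖_{L²_f(H_s)}, where the sum is over all products L^I of at most two Lorentz boosts L_a = x^a ∂_t + t ∂_a (a = 1,2,3). -/
/-!
Restricted to `H_s` and parametrised by `x ∈ ℝ³`, with `t(x) = √(s² + |x|²)`, a function `u`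
satisfies `t ∂_a (u|_{H_s}) = L_a u` (`hasDerivAt_hyp`). The estimate is thus the embedding
`H² ⊂ L^∞` in dimension three, rescaled to length `T = t(x₀)` around the point `x₀`, where `t` is
comparable to `T` (`hyp_lower`).

The embedding is proved directly. For `h(ρ) = u(x₀ + ρ T y)`, the one-dimensional identity
`h(0) = ∫₀¹ ρ (h w)'' dρ` with `w = (1 - ρ)²` bounds `|u(x₀)|` by `4 ∫₀¹ ρ G(x₀ + ρ T y) dρ`, where
`G` is the sum of `|u|`, `|L_a u|` and `|L_a L_b u|` on `H_s` (`one_dim`, `pointwise_bound`). Now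
average over `y` in a fixed cube and exchange the integrals. By Cauchy-Schwarz and the change of
variables `x = x₀ + ρ T y`, the integral over the cube is at most `(ρ T)^{-3/2} ‖G‖_{L²}`, and
`∫₀¹ ρ · ρ^{-3/2} dρ = 2` (`radial_average`). Hence `T^{3/2} |u(x₀)| ≲ ‖G‖_{L²}`, while
`s + |x₀| ≤ 2 T`. The support condition makes all functions compactly supported on `H_s`
(`hasCompactSupport_hyp`), so the `L²` norms are those of genuinely square-integrable functions.
-/


noncomputable section

open MeasureTheory Real

def pd (α : Fin 4) (u : (Fin 4 → ℝ) → ℝ) : (Fin 4 → ℝ) → ℝ :=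
  fun p => fderiv ℝ u p (Pi.single α 1)

def pdI : List (Fin 4) → ((Fin 4 → ℝ) → ℝ) → ((Fin 4 → ℝ) → ℝ)
  | [], u => u
  | α :: I, u => pd α (pdI I u)

def Lb (a : Fin 3) (u : (Fin 4 → ℝ) → ℝ) : (Fin 4 → ℝ) → ℝ :=
  fun p => p a.succ * pd 0 u p + p 0 * pd a.succ u p

def LJ : List (Fin 3) → ((Fin 4 → ℝ) → ℝ) → ((Fin 4 → ℝ) → ℝ)
  | [], u => u
  | a :: J, u => Lb a (LJ J u)

def sdu (a : Fin 3) (u : (Fin 4 → ℝ) → ℝ) : (Fin 4 → ℝ) → ℝ :=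
  fun p => (p a.succ / p 0) * pd 0 u p + pd a.succ u p

def Box (u : (Fin 4 → ℝ) → ℝ) : (Fin 4 → ℝ) → ℝ :=
  fun p => -(pd 0 (pd 0 u) p) + ∑ a : Fin 3, pd a.succ (pd a.succ u) p

def rad (x : Fin 3 → ℝ) : ℝ := Real.sqrt (∑ a, (x a)^2)

def sp (p : Fin 4 → ℝ) : Fin 3 → ℝ := fun a => p a.succ

def hyp (s : ℝ) (x : Fin 3 → ℝ) : Fin 4 → ℝ :=
  Fin.cons (Real.sqrt (s^2 + ∑ a, (x a)^2)) x

def L2f (s : ℝ) (w : (Fin 4 → ℝ) → ℝ) : ℝ :=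
  Real.sqrt (∫ x : Fin 3 → ℝ, (w (hyp s x))^2)

def SuppK (u : (Fin 4 → ℝ) → ℝ) : Prop :=
  ∀ p : Fin 4 → ℝ, p 0 - 1 < rad (sp p) → u p = 0

def Em (s : ℝ) (u : (Fin 4 → ℝ) → ℝ) : ℝ :=
  ∫ x : Fin 3 → ℝ,
    (((s / hyp s x 0) * pd 0 u (hyp s x))^2 + ∑ a : Fin 3, (sdu a u (hyp s x))^2)

def Emc (c s : ℝ) (u : (Fin 4 → ℝ) → ℝ) : ℝ :=
  Em s u + c^2 * ∫ x : Fin 3 → ℝ, (u (hyp s x))^2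

def Kset : Set (Fin 4 → ℝ) := {p | rad (sp p) < p 0 - 1}

/-! ### A one-dimensional bound -/

/-- A bound for `h 0` by weighted integrals of `h`, `h'`, `h''`, obtained from
`h 0 = ∫₀¹ ρ (h w)''` with the cutoff `w = (1 - ρ)²`. The factor `ρ` in the integral is what makes
the later average over dilated cubes converge. -/
theorem one_dim {h h1 h2 : ℝ → ℝ} (hh : ∀ ρ, HasDerivAt h (h1 ρ) ρ)
    (hh1 : ∀ ρ, HasDerivAt h1 (h2 ρ) ρ) (hc : Continuous h2) {g : ℝ → ℝ} (hg : Continuous g)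
    (hb : ∀ ρ ∈ Set.Icc (0:ℝ) 1, |h ρ| + |h1 ρ| + |h2 ρ| ≤ g ρ) :
    |h 0| ≤ 4 * ∫ ρ in (0:ℝ)..1, ρ * g ρ := by
  have c1 : Continuous h1 := continuous_iff_continuousAt.2 fun ρ => (hh1 ρ).continuousAt
  have c0 : Continuous h := continuous_iff_continuousAt.2 fun ρ => (hh ρ).continuousAt
  -- `h w - ρ (h w)'` is a primitive of `-ρ (h w)''`; it vanishes at `1` and equals `h 0` at `0`
  have key : ∫ ρ in (0:ℝ)..1, -(ρ * (h2 ρ * (1 - ρ)^2 - 4 * h1 ρ * (1 - ρ) + 2 * h ρ)) = - h 0 := by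
    have := intervalIntegral.integral_eq_sub_of_hasDerivAt (a := 0) (b := 1)
      (f := fun ρ => h ρ * (1 - ρ)^2 - ρ * (h1 ρ * (1-ρ)^2 - 2 * h ρ * (1 - ρ)))
      (f' := fun ρ => -(ρ * (h2 ρ * (1 - ρ)^2 - 4 * h1 ρ * (1 - ρ) + 2 * h ρ))) ?_ ?_
    · rw [this]; ring
    · intro ρ _
      have d1 : HasDerivAt (fun ρ : ℝ => 1 - ρ) (-1) ρ := by
        simpa using (hasDerivAt_id ρ).const_sub 1
      have d2 : HasDerivAt (fun ρ : ℝ => (1 - ρ)^2) (2 * (1 - ρ) * (-1)) ρ := by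
        simpa using! d1.pow 2
      refine (((hh ρ).mul d2).sub ((hasDerivAt_id ρ).mul
        (((hh1 ρ).mul d2).sub (((hh ρ).const_mul 2).mul d1)))).congr_deriv ?_
      simp only [id, Pi.mul_apply, Pi.sub_apply]
      ring
    · exact Continuous.intervalIntegrable (by fun_prop) _ _
  rw [← abs_neg, ← key, ← intervalIntegral.integral_const_mul]
  refine (intervalIntegral.abs_integral_le_integral_abs zero_le_one).trans ?_
  refine intervalIntegral.integral_mono_on zero_le_one
    (Continuous.intervalIntegrable (by fun_prop) _ _)
    (Continuous.intervalIntegrable (by fun_prop) _ _) ?_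
  intro ρ hρ
  have hb' := hb ρ hρ
  have hr : (1-ρ)^2 ≤ 1 := by nlinarith [hρ.1, hρ.2]
  have hr' : |1-ρ| ≤ 1 := by rw [abs_le]; constructor <;> linarith [hρ.1, hρ.2]
  rw [abs_neg, abs_mul, abs_of_nonneg hρ.1]
  have e1 : |h2 ρ * (1 - ρ)^2| ≤ |h2 ρ| := by
    rw [abs_mul, abs_of_nonneg (sq_nonneg (1-ρ))]
    exact mul_le_of_le_one_right (abs_nonneg _) hr
  have e2 : |4 * h1 ρ * (1 - ρ)| ≤ 4 * |h1 ρ| := by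
    rw [abs_mul, abs_mul, abs_of_nonneg (by norm_num : (0:ℝ) ≤ 4)]
    exact mul_le_of_le_one_right (by positivity) hr'
  have e3 : |2 * h ρ| = 2 * |h ρ| := by rw [abs_mul]; norm_num
  have : |h2 ρ * (1 - ρ)^2 - 4 * h1 ρ * (1 - ρ) + 2 * h ρ| ≤ 4 * g ρ := by
    refine (abs_add_le _ _).trans ?_
    have := abs_sub (h2 ρ * (1 - ρ)^2) (4 * h1 ρ * (1 - ρ))
    have := abs_nonneg (h ρ)
    have := abs_nonneg (h2 ρ)
    linarith
  calc _ ≤ ρ * (4 * g ρ) := mul_le_mul_of_nonneg_left this hρ.1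
    _ = _ := by ring

/-! ### Functions and boosts restricted to a hyperboloid -/

/-- Differentiation along a line lifted to `H_s`: the tangential derivatives are boosts divided
by `t`. -/
theorem hasDerivAt_hyp {s : ℝ} (hs : 0 < s) {w : (Fin 4 → ℝ) → ℝ} (hw : Differentiable ℝ w)
    (x z : Fin 3 → ℝ) (ρ : ℝ) :
    HasDerivAt (fun ρ : ℝ => hyp s (x + ρ • z) 0)
      (∑ a, z a * (x + ρ • z) a / hyp s (x + ρ • z) 0) ρ ∧
    HasDerivAt (fun ρ : ℝ => w (hyp s (x + ρ • z)))
      (∑ a, z a / hyp s (x + ρ • z) 0 * Lb a w (hyp s (x + ρ • z))) ρ := by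
  have hpos : 0 < s^2 + ∑ a, ((x + ρ • z) a)^2 := by positivity
  have h0 : hyp s (x + ρ • z) 0 = √(s^2 + ∑ a, ((x + ρ • z) a)^2) := rfl
  have ht : 0 < hyp s (x + ρ • z) 0 := by rw [h0]; exact Real.sqrt_pos.2 hpos
  have da : ∀ a, HasDerivAt (fun ρ : ℝ => (x + ρ • z) a) (z a) ρ := fun a => by
    simpa using ((hasDerivAt_id ρ).mul_const (z a)).const_add (x a)
  have d0 : HasDerivAt (fun ρ : ℝ => hyp s (x + ρ • z) 0)
      (∑ a, z a * (x + ρ • z) a / hyp s (x + ρ • z) 0) ρ := by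
    have : HasDerivAt (fun ρ : ℝ => s^2 + ∑ a, ((x + ρ • z) a)^2)
        (∑ a, 2 * (x + ρ • z) a * z a) ρ := by
      refine HasDerivAt.const_add _ (HasDerivAt.fun_sum fun a _ => ?_)
      simpa using! (da a).pow 2
    refine (this.sqrt hpos.ne').congr_deriv ?_
    rw [← h0, Finset.sum_div]
    refine Finset.sum_congr rfl fun a _ => ?_
    field_simp
  refine ⟨d0, ?_⟩
  have dγ : HasDerivAt (fun ρ : ℝ => hyp s (x + ρ • z))
      (Fin.cons (∑ a, z a * (x + ρ • z) a / hyp s (x + ρ • z) 0) z : Fin 4 → ℝ) ρ := by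
    rw [hasDerivAt_pi]
    intro i
    refine Fin.cases ?_ (fun a => ?_) i
    · simpa using d0
    · simpa [hyp] using da a
  have := (hw (hyp s (x + ρ • z))).hasFDerivAt.comp_hasDerivAt ρ dγ
  refine this.congr_deriv ?_
  have hlin : ∀ v : Fin 4 → ℝ, fderiv ℝ w (hyp s (x + ρ • z)) v
      = ∑ i, v i * pd i w (hyp s (x + ρ • z)) := by
    intro v
    conv_lhs => rw [pi_eq_sum_univ' v]
    simp [pd]
  rw [hlin, Fin.sum_univ_succ]
  simp only [Fin.cons_zero, Fin.cons_succ]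
  rw [Finset.sum_mul, ← Finset.sum_add_distrib]
  refine Finset.sum_congr rfl fun a _ => ?_
  have : hyp s (x + ρ • z) a.succ = (x + ρ • z) a := rfl
  simp only [Lb, this]
  field_simp

theorem contDiff_Lb (a : Fin 3) {u : (Fin 4 → ℝ) → ℝ} (hu : ContDiff ℝ (⊤ : ℕ∞) u) :
    ContDiff ℝ (⊤ : ℕ∞) (Lb a u) := by
  have h : ∀ i, ContDiff ℝ (⊤ : ℕ∞) (pd i u) := fun i =>
    (hu.fderiv_right (m := (⊤ : ℕ∞)) (by simp)).clm_apply contDiff_const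
  unfold Lb
  have := h 0
  have := h a.succ
  fun_prop

theorem suppK_Lb (a : Fin 3) {u : (Fin 4 → ℝ) → ℝ} (hu : SuppK u) : SuppK (Lb a u) := by
  intro p hp
  have hopen : IsOpen {p : Fin 4 → ℝ | p 0 - 1 < rad (sp p)} := by
    refine isOpen_lt (by fun_prop) ?_
    unfold rad sp
    fun_prop
  have : u =ᶠ[nhds p] fun _ => 0 :=
    Filter.eventuallyEq_of_mem (hopen.mem_nhds hp) fun q hq => hu q hq
  simp [Lb, pd, this.fderiv_eq]

theorem continuous_hyp (s : ℝ) : Continuous (hyp s) := by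
  refine continuous_pi fun i => ?_
  refine Fin.cases ?_ (fun a => ?_) i
  · simp only [hyp, Fin.cons_zero]; fun_prop
  · simp only [hyp, Fin.cons_succ]; fun_prop

/-- A function supported in `K` has bounded support on each hyperboloid: `√(s² + r²) - 1 ≥ r`
forces `r ≤ (s² - 1) / 2`. -/
theorem hasCompactSupport_hyp (s : ℝ) {w : (Fin 4 → ℝ) → ℝ} (hw : SuppK w) :
    HasCompactSupport fun x => w (hyp s x) := by
  refine HasCompactSupport.intro (isCompact_closedBall (0 : Fin 3 → ℝ) (s^2)) fun x hx => hw _ ?_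
  by_contra! hcon
  apply hx
  have e1 : hyp s x 0 = √(s^2 + ∑ a, (x a)^2) := rfl
  have e2 : sp (hyp s x) = x := rfl
  rw [e1, e2] at hcon
  have hS : 0 ≤ ∑ a, (x a)^2 := by positivity
  have q1 := Real.sq_sqrt hS
  have q2 := Real.sq_sqrt (by positivity : 0 ≤ s^2 + ∑ a, (x a)^2)
  have hr0 : 0 ≤ rad x := Real.sqrt_nonneg _
  change rad x ^ 2 = _ at q1
  have hr : rad x ≤ s^2 := by nlinarith
  rw [mem_closedBall_zero_iff, pi_norm_le_iff_of_nonneg (by positivity)]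
  intro a
  refine le_trans ?_ hr
  rw [Real.norm_eq_abs]
  exact Real.abs_le_sqrt (Finset.single_le_sum (f := fun a => (x a)^2)
    (fun _ _ => sq_nonneg _) (Finset.mem_univ a))

/-! ### Averaging over a cube of directions -/

/-- The set of directions over which the one-dimensional bound is averaged. Any bounded set of
positive measure would do; side `1/8` keeps `t` comparable to its value at the base point. -/
def cube : Set (Fin 3 → ℝ) := Set.Icc 0 (fun _ => 1/8)

theorem volume_cube : volume.real cube = 1/512 := by
  rw [Measure.real, cube, Real.volume_Icc_pi_toReal (fun _ => by norm_num)]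
  norm_num [Fin.prod_univ_three]

theorem cube_cauchy_schwarz {F : (Fin 3 → ℝ) → ℝ} (hF : Continuous F) (hc : HasCompactSupport F)
    (x₀ : Fin 3 → ℝ) {R : ℝ} (hR : 0 < R) :
    ∫ y in cube, |F (x₀ + R • y)| ≤ R ^ (-(3:ℝ)/2) * √(∫ x, F x ^ 2) := by
  have hcpt : IsCompact cube := isCompact_Icc
  have hcont : Continuous fun y => F (x₀ + R • y) := by fun_prop
  have hfin : IsFiniteMeasure (volume.restrict cube) :=
    ⟨by simpa using hcpt.measure_lt_top⟩
  have hcs : HasCompactSupport fun y => F (x₀ + R • y) :=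
    hc.comp_homeomorph ((Homeomorph.smulOfNeZero R hR.ne').trans (Homeomorph.addLeft x₀))
  have hm := hcont.memLp_of_hasCompactSupport (p := ENNReal.ofReal 2) (μ := volume) hcs
  have h1 := integral_mul_le_Lp_mul_Lq_of_nonneg (μ := volume.restrict cube)
    (p := 2) (q := 2) ⟨by norm_num, by norm_num, by norm_num⟩
    (f := fun y => |F (x₀ + R • y)|) (g := fun _ => 1)
    (Filter.Eventually.of_forall fun _ => abs_nonneg _)
    (Filter.Eventually.of_forall fun _ => zero_le_one)
    (hm.restrict cube).abs (memLp_const 1)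
  have e2 : ∫ y in cube, |F (x₀ + R • y)| ^ (2:ℝ) ≤ R ^ (-3:ℝ) * ∫ x, F x ^ 2 := by
    have : ∀ y, |F (x₀ + R • y)| ^ (2:ℝ) = F (x₀ + R • y) ^ 2 := fun y => by
      rw [Real.rpow_two, sq_abs]
    simp only [this]
    have hi : Integrable (fun y => F (x₀ + R • y) ^ 2) volume := by
      refine Continuous.integrable_of_hasCompactSupport (by fun_prop) ?_
      simpa [pow_two] using! hcs.mul_right (f' := fun y => F (x₀ + R • y))
    refine (setIntegral_le_integral hi (Filter.Eventually.of_forall fun _ => sq_nonneg _)).trans ?_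
    rw [Measure.integral_comp_smul volume (fun y => F (x₀ + y) ^ 2) R,
      integral_add_left_eq_self (fun y => F y ^ 2) x₀]
    rw [abs_of_pos (by positivity), smul_eq_mul, Real.rpow_neg hR.le]
    simp
  simp only [mul_one, one_rpow, integral_const, smul_eq_mul, measureReal_restrict_apply_univ,
    volume_cube] at h1
  have hI : 0 ≤ ∫ x, F x ^ 2 := integral_nonneg fun _ => sq_nonneg _
  calc _ ≤ _ := h1
    _ ≤ (R ^ (-3:ℝ) * ∫ x, F x ^ 2) ^ (1/2:ℝ) * 1 := by
      gcongr
      exact Real.rpow_le_one (by norm_num) (by norm_num) (by norm_num)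
    _ = _ := by
      rw [mul_one, Real.mul_rpow (by positivity) hI, ← Real.rpow_mul hR.le, Real.sqrt_eq_rpow]
      norm_num

/-- Dilating the cube by `ρ T` costs `(ρ T)^{-3/2}` in `L²`; in dimension three the weight `ρ`
leaves `ρ^{-1/2}`, which is integrable on `(0, 1]`. -/
theorem radial_average {F : (Fin 3 → ℝ) → ℝ} (hF : Continuous F) (hc : HasCompactSupport F)
    (x₀ : Fin 3 → ℝ) {T : ℝ} (hT : 0 < T) :
    ∫ y in cube, ∫ ρ in (0:ℝ)..1, ρ * |F (x₀ + (ρ * T) • y)|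
      ≤ 2 * T ^ (-(3:ℝ)/2) * √(∫ x, F x ^ 2) := by
  have hcpt : IsCompact cube := isCompact_Icc
  have hcont : Continuous (Function.uncurry fun (y : Fin 3 → ℝ) (ρ : ℝ) =>
    ρ * |F (x₀ + (ρ * T) • y)|) := by unfold Function.uncurry; fun_prop
  have hint : Integrable (Function.uncurry fun (y : Fin 3 → ℝ) (ρ : ℝ) =>
      ρ * |F (x₀ + (ρ * T) • y)|)
      ((volume.restrict cube).prod (volume.restrict (Set.Ioc (0:ℝ) 1))) := by
    rw [Measure.prod_restrict]
    exact (hcont.continuousOn.integrableOn_compact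
      (hcpt.prod isCompact_Icc)).mono_set (Set.prod_mono_right Set.Ioc_subset_Icc_self)
  have hint2 := hint.integral_prod_right
  simp only [intervalIntegral.integral_of_le (zero_le_one' ℝ)]
  rw [integral_integral_swap hint]
  have hr : IntegrableOn (fun ρ : ℝ => ρ ^ (-(1:ℝ)/2)) (Set.Ioc 0 1) := by
    have := intervalIntegral.intervalIntegrable_rpow' (a := 0) (b := 1) (r := -(1:ℝ)/2)
      (by norm_num)
    rwa [intervalIntegrable_iff_integrableOn_Ioc_of_le zero_le_one] at this
  have hval : ∫ ρ in Set.Ioc (0:ℝ) 1, ρ ^ (-(1:ℝ)/2) = 2 := by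
    rw [← intervalIntegral.integral_of_le zero_le_one, integral_rpow (by norm_num)]
    norm_num
  calc _ ≤ ∫ ρ in Set.Ioc (0:ℝ) 1,
        ρ ^ (-(1:ℝ)/2) * (T ^ (-(3:ℝ)/2) * √(∫ x, F x ^ 2)) := by
        refine setIntegral_mono_on hint2 (hr.mul_const _) measurableSet_Ioc fun ρ hρ => ?_
        rw [integral_const_mul]
        refine (mul_le_mul_of_nonneg_left
          (cube_cauchy_schwarz hF hc x₀ (mul_pos hρ.1 hT)) hρ.1.le).trans_eq ?_
        rw [Real.mul_rpow hρ.1.le hT.le]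
        have : ρ * ρ ^ (-(3:ℝ)/2) = ρ ^ (-(1:ℝ)/2) := by
          rw [← Real.rpow_one_add' hρ.1.le (by norm_num)]; norm_num
        rw [← this]; ring
    _ = _ := by rw [integral_mul_const, hval]; ring

/-- The constant is `4 * 2 * 512`, where `512` is the inverse volume of the cube. -/
theorem averaged_bound {ι : Type*} [Fintype ι] {W : ι → (Fin 3 → ℝ) → ℝ}
    (hW : ∀ i, Continuous (W i)) (hc : ∀ i, HasCompactSupport (W i))
    (x₀ : Fin 3 → ℝ) {T : ℝ} (hT : 0 < T) {M : ℝ}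
    (hM : ∀ y ∈ cube, M ≤ 4 * ∫ ρ in (0:ℝ)..1, ρ * ∑ i, |W i (x₀ + (ρ * T) • y)|) :
    M ≤ 4096 * T ^ (-(3:ℝ)/2) * ∑ i, √(∫ x, W i x ^ 2) := by
  have hcpt : IsCompact cube := isCompact_Icc
  have hfin : IsFiniteMeasure (volume.restrict cube) :=
    ⟨by simpa using hcpt.measure_lt_top⟩
  have hsum : ∀ y, ∫ ρ in (0:ℝ)..1, ρ * ∑ i, |W i (x₀ + (ρ * T) • y)|
      = ∑ i, ∫ ρ in (0:ℝ)..1, ρ * |W i (x₀ + (ρ * T) • y)| := fun y => by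
    rw [← intervalIntegral.integral_finsetSum]
    · simp only [Finset.mul_sum]
    · intro i _
      have := hW i
      exact Continuous.intervalIntegrable (by fun_prop) _ _
  have hi : ∀ i, Integrable (fun y => ∫ ρ in (0:ℝ)..1, ρ * |W i (x₀ + (ρ * T) • y)|)
      (volume.restrict cube) := fun i => by
    have := hW i
    refine ContinuousOn.integrableOn_compact hcpt (Continuous.continuousOn ?_)
    exact intervalIntegral.continuous_parametric_intervalIntegral_of_continuous'
      (by unfold Function.uncurry; fun_prop) _ _
  have h1 : ∫ _ in cube, M ≤
      ∫ y in cube, 4 * ∑ i, ∫ ρ in (0:ℝ)..1, ρ * |W i (x₀ + (ρ * T) • y)| := by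
    refine setIntegral_mono_on (integrable_const _) ?_ measurableSet_Icc fun y hy => ?_
    · exact (integrable_finsetSum _ fun i _ => hi i).const_mul 4
    · rw [← hsum]; exact hM y hy
  rw [integral_const_mul, integral_finsetSum _ fun i _ => hi i, integral_const,
    measureReal_restrict_apply_univ, volume_cube, smul_eq_mul] at h1
  have h2 := Finset.sum_le_sum fun i (_ : i ∈ Finset.univ) => radial_average (hW i) (hc i) x₀ hT
  rw [← Finset.mul_sum] at h2
  linarith

/-! ### The estimate on the hyperboloid -/

theorem abs_le_hyp (s : ℝ) (x : Fin 3 → ℝ) (a : Fin 3) : |x a| ≤ hyp s x 0 :=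
  Real.abs_le_sqrt <| (Finset.single_le_sum (f := fun a => (x a)^2)
    (fun _ _ => sq_nonneg _) (Finset.mem_univ a)).trans (by nlinarith [sq_nonneg s])

theorem hyp_sq (s : ℝ) (x : Fin 3 → ℝ) : hyp s x 0 ^ 2 = s^2 + ∑ a, (x a)^2 :=
  Real.sq_sqrt (by positivity)

theorem hyp_pos {s : ℝ} (hs : 0 < s) (x : Fin 3 → ℝ) : 0 < hyp s x 0 :=
  Real.sqrt_pos.2 (by positivity)

/-- On the part of the hyperboloid used for averaging, `t` is at least half its value at `x₀`. -/
theorem hyp_lower {s : ℝ} (hs : 0 < s) (x₀ : Fin 3 → ℝ) {y : Fin 3 → ℝ} (hy : y ∈ cube)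
    {ρ : ℝ} (hρ : ρ ∈ Set.Icc (0:ℝ) 1) :
    hyp s x₀ 0 ≤ 2 * hyp s (x₀ + ρ • hyp s x₀ 0 • y) 0 := by
  set T := hyp s x₀ 0 with hT
  have hTp : 0 < T := hyp_pos hs x₀
  -- in squares: `t(x)² ≥ s² + ∑ (x₀ a)² - 3 T² / 4 = T² / 4`, each coordinate losing at most `T² / 4`
  refine (sq_le_sq₀ hTp.le (by linarith [hyp_pos hs (x₀ + ρ • T • y)])).1 ?_
  rw [mul_pow]
  have h1 : ∀ a, (x₀ a)^2 - T^2/4 ≤ ((x₀ + ρ • T • y) a)^2 := fun a => by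
    have hya : 0 ≤ y a ∧ y a ≤ 1/8 := ⟨hy.1 a, hy.2 a⟩
    have hq : 0 ≤ ρ * y a ∧ ρ * y a ≤ 1/8 :=
      ⟨mul_nonneg hρ.1 hya.1, by nlinarith [hρ.1, hρ.2, hya.1, hya.2]⟩
    have hx := abs_le.1 (abs_le_hyp s x₀ a)
    rw [← hT] at hx
    have e : (x₀ + ρ • T • y) a = x₀ a + (ρ * y a) * T := by simp; ring
    rw [e]
    have h3 : -T * T ≤ x₀ a * T := mul_le_mul_of_nonneg_right hx.1 hTp.le
    have h4 : (ρ * y a) * (-T * T) ≤ (ρ * y a) * (x₀ a * T) := mul_le_mul_of_nonneg_left h3 hq.1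
    have h5 : (ρ * y a) * (T * T) ≤ 1/8 * (T * T) :=
      mul_le_mul_of_nonneg_right hq.2 (by positivity)
    nlinarith [sq_nonneg (ρ * y a * T)]
  have h2 := Finset.sum_le_sum fun a (_ : a ∈ Finset.univ) => h1 a
  have h3 := hyp_sq s x₀
  rw [← hT] at h3
  simp only [Finset.sum_sub_distrib, Finset.sum_const, Finset.card_univ, Fintype.card_fin,
    nsmul_eq_mul] at h2
  have h4 := hyp_sq s (x₀ + ρ • T • y)
  push_cast at h2
  linarith [sq_nonneg s]

/-- The functions occurring on the right-hand side, restricted to `H_s`: `none` is `u`,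
`inl a` is `L_a u` and `inr (a, b)` is `L_a L_b u`. -/
def boosted (s : ℝ) (u : (Fin 4 → ℝ) → ℝ) :
    Option (Fin 3 ⊕ Fin 3 × Fin 3) → (Fin 3 → ℝ) → ℝ
  | none => fun x => u (hyp s x)
  | some (.inl a) => fun x => Lb a u (hyp s x)
  | some (.inr (a, b)) => fun x => Lb a (Lb b u) (hyp s x)

/-- Along each ray `ρ ↦ x₀ + ρ T y` with `T = t(x₀)` and `y ∈ cube`, every `ρ`-derivative of `u`
costs a factor `T y_a / t ≤ 1/4` and produces a boost, because `t ∂_a (u|_{H_s}) = L_a u`; the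
derivative falling on `1 / t` is bounded as well. Then `one_dim` applies. -/
theorem pointwise_bound {s : ℝ} (hs : 0 < s) {u : (Fin 4 → ℝ) → ℝ}
    (hu : ContDiff ℝ (⊤ : ℕ∞) u) (x₀ : Fin 3 → ℝ) {y : Fin 3 → ℝ} (hy : y ∈ cube) :
    |u (hyp s x₀)| ≤
      4 * ∫ ρ in (0:ℝ)..1, ρ * ∑ i, |boosted s u i (x₀ + (ρ * hyp s x₀ 0) • y)| := by
  set T := hyp s x₀ 0 with hT
  have hTp : 0 < T := hyp_pos hs x₀
  set z : Fin 3 → ℝ := T • y with hz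
  have hdiff : ∀ {w : (Fin 4 → ℝ) → ℝ}, ContDiff ℝ (⊤ : ℕ∞) w → Differentiable ℝ w :=
    fun h => h.differentiable (by simp)
  have hL : ∀ a, ContDiff ℝ (⊤ : ℕ∞) (Lb a u) := fun a => contDiff_Lb a hu
  have hLL : ∀ a b, ContDiff ℝ (⊤ : ℕ∞) (Lb a (Lb b u)) := fun a b => contDiff_Lb a (hL b)
  have hγ : Continuous fun ρ : ℝ => hyp s (x₀ + ρ • z) :=
    (continuous_hyp s).comp (by fun_prop)
  have cw : ∀ {w : (Fin 4 → ℝ) → ℝ}, ContDiff ℝ (⊤ : ℕ∞) w →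
      Continuous fun ρ : ℝ => w (hyp s (x₀ + ρ • z)) := fun h => h.continuous.comp hγ
  have ct : Continuous fun ρ : ℝ => hyp s (x₀ + ρ • z) 0 := (continuous_apply 0).comp hγ
  have htp : ∀ ρ : ℝ, 0 < hyp s (x₀ + ρ • z) 0 := fun ρ => hyp_pos hs _
  have htn : ∀ ρ : ℝ, hyp s (x₀ + ρ • z) 0 ≠ 0 := fun ρ => (htp ρ).ne'
  have hsmul : ∀ ρ : ℝ, (ρ * T) • y = ρ • z := fun ρ => by rw [hz, smul_smul]
  simp only [hsmul, Fintype.sum_option, Fintype.sum_sum_type, Fintype.sum_prod_type, boosted]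
  have key := one_dim
    (h := fun ρ : ℝ => u (hyp s (x₀ + ρ • z)))
    (h1 := fun ρ => ∑ a, z a / hyp s (x₀ + ρ • z) 0 * Lb a u (hyp s (x₀ + ρ • z)))
    (h2 := fun ρ => ∑ a,
      (-(z a * ∑ b, z b * (x₀ + ρ • z) b / hyp s (x₀ + ρ • z) 0) / hyp s (x₀ + ρ • z) 0 ^ 2
          * Lb a u (hyp s (x₀ + ρ • z))
        + z a / hyp s (x₀ + ρ • z) 0 *
          ∑ b, z b / hyp s (x₀ + ρ • z) 0 * Lb b (Lb a u) (hyp s (x₀ + ρ • z))))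
    (g := fun ρ => |u (hyp s (x₀ + ρ • z))| + (∑ a, |Lb a u (hyp s (x₀ + ρ • z))|
      + ∑ a, ∑ b, |Lb a (Lb b u) (hyp s (x₀ + ρ • z))|))
    (fun ρ => (hasDerivAt_hyp hs (hdiff hu) x₀ z ρ).2) ?_ ?_ ?_ ?_
  · simpa using key
  · intro ρ
    refine HasDerivAt.fun_sum fun a _ => ?_
    have d := hasDerivAt_hyp hs (hdiff (hL a)) x₀ z ρ
    refine ((((hasDerivAt_const ρ (z a)).div d.1 (htn ρ)).mul d.2)).congr_deriv ?_
    simp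
  · have c1 := fun a => cw (hL a)
    have c2 := fun a b => cw (hLL a b)
    have c3 : ∀ b, Continuous fun ρ : ℝ => (x₀ + ρ • z) b := fun b => by simp; fun_prop
    refine continuous_finsetSum _ fun a _ => ((Continuous.div ?_ (ct.pow 2)
      fun ρ => pow_ne_zero 2 (htn ρ)).mul (c1 a)).add
      ((continuous_const.div ct htn).mul (continuous_finsetSum _ fun b _ =>
        (continuous_const.div ct htn).mul (c2 b a)))
    exact (continuous_const.mul (continuous_finsetSum _ fun b _ =>
      (continuous_const.mul (c3 b)).div ct htn)).neg
  · have c0 := cw hu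
    have c1 := fun a => cw (hL a)
    have c2 := fun a b => cw (hLL a b)
    fun_prop
  · intro ρ hρ
    have hlow := hyp_lower hs x₀ hy hρ
    rw [← hT, ← hz] at hlow
    have hx := abs_le_hyp s (x₀ + ρ • z)
    have ht := htp ρ
    set t := hyp s (x₀ + ρ • z) 0
    set P := hyp s (x₀ + ρ • z)
    have hza : ∀ a, |z a / t| ≤ 1/4 := fun a => by
      have h0 : 0 ≤ y a := hy.1 a
      have h1 : y a ≤ 1/8 := hy.2 a
      have e : z a = T * y a := rfl
      rw [abs_div, abs_of_pos ht, div_le_iff₀ ht, e, abs_of_nonneg (by positivity)]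
      nlinarith
    have hzx : ∀ b, |z b * (x₀ + ρ • z) b / t / t| ≤ 1/4 := fun b => by
      have e : z b * (x₀ + ρ • z) b / t / t = z b / t * ((x₀ + ρ • z) b / t) := by ring
      have h1 : |(x₀ + ρ • z) b / t| ≤ 1 := by
        rw [abs_div, abs_of_pos ht]; exact div_le_one_of_le₀ (hx b) ht.le
      rw [e, abs_mul]
      exact (mul_le_of_le_one_right (abs_nonneg _) h1).trans (hza b)
    have hsum : |(∑ b, z b * (x₀ + ρ • z) b / t) / t| ≤ 3/4 := by
      rw [Finset.sum_div]
      refine (Finset.abs_sum_le_sum_abs _ _).trans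
        ((Finset.sum_le_sum fun b _ => hzx b).trans ?_)
      norm_num
    have b1 : |∑ a, z a / t * Lb a u P| ≤ ∑ a, 1/4 * |Lb a u P| := by
      refine (Finset.abs_sum_le_sum_abs _ _).trans (Finset.sum_le_sum fun a _ => ?_)
      rw [abs_mul]
      exact mul_le_mul_of_nonneg_right (hza a) (abs_nonneg _)
    have b2 : |∑ a, (-(z a * ∑ b, z b * (x₀ + ρ • z) b / t) / t ^ 2 * Lb a u P
        + z a / t * ∑ b, z b / t * Lb b (Lb a u) P)|
        ≤ ∑ a, (1/4 * (3/4) * |Lb a u P| + 1/4 * ∑ b, 1 * |Lb b (Lb a u) P|) := by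
      refine (Finset.abs_sum_le_sum_abs _ _).trans (Finset.sum_le_sum fun a _ => ?_)
      refine (abs_add_le _ _).trans (add_le_add ?_ ?_)
      · have e : -(z a * ∑ b, z b * (x₀ + ρ • z) b / t) / t ^ 2
            = -(z a / t * ((∑ b, z b * (x₀ + ρ • z) b / t) / t)) := by
          field_simp
        rw [abs_mul, e, abs_neg, abs_mul]
        gcongr
        exact hza a
      · rw [abs_mul]
        refine mul_le_mul (hza a) ?_ (abs_nonneg _) (by norm_num)
        refine (Finset.abs_sum_le_sum_abs _ _).trans (Finset.sum_le_sum fun b _ => ?_)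
        rw [abs_mul]
        exact mul_le_mul_of_nonneg_right ((hza b).trans (by norm_num)) (abs_nonneg _)
    have hcomm : ∑ a, ∑ b, |Lb b (Lb a u) P| = ∑ a, ∑ b, |Lb a (Lb b u) P| :=
      Finset.sum_comm
    rw [← Finset.mul_sum] at b1
    replace b2 := b2.trans_eq (b := _) (c := 3/16 * ∑ a, |Lb a u P|
      + 1/4 * ∑ a, ∑ b, |Lb a (Lb b u) P|) (by
        simp only [one_mul, Finset.sum_add_distrib, ← Finset.mul_sum, hcomm]; ring)
    have n1 : 0 ≤ ∑ a, |Lb a u P| := Finset.sum_nonneg fun _ _ => abs_nonneg _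
    have n2 : 0 ≤ ∑ a, ∑ b, |Lb a (Lb b u) P| :=
      Finset.sum_nonneg fun _ _ => Finset.sum_nonneg fun _ _ => abs_nonneg _
    linarith

/-- Proposition 2.2: Sobolev-type estimate on hyperboloids:
`sup_{H_s} (s+|x|)^{3/2} |u| ≲ Σ_{|I|≤2} ‖L^I u‖_{L²_f(H_s)}`. -/
theorem sobolev_estimate_on_hyperboloids :
    ∃ C : ℝ, 0 < C ∧
      ∀ s : ℝ, 2 ≤ s →
        ∀ u : (Fin 4 → ℝ) → ℝ, ContDiff ℝ (⊤ : ℕ∞) u → SuppK u →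
          ∀ p : Fin 4 → ℝ, 0 < p 0 → (p 0)^2 - ∑ a : Fin 3, (p a.succ)^2 = s^2 →
            (s + rad (sp p)) ^ ((3:ℝ)/2) * |u p|
              ≤ C * (L2f s u + (∑ a : Fin 3, L2f s (Lb a u))
                  + ∑ a : Fin 3, ∑ b : Fin 3, L2f s (Lb a (Lb b u))) := by
  -- `32768 = 8 * 4096`: `s + |x| ≤ 4 T` gives the `8`, averaging over the cube the `4096`
  refine ⟨32768, by norm_num, fun s hs2 u hu hsupp p hp0 hp => ?_⟩
  have hs : 0 < s := by linarith
  have hpx : p = hyp s (sp p) := by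
    funext i
    refine Fin.cases ?_ (fun a => rfl) i
    have : p 0 ^ 2 = s^2 + ∑ a, (sp p a)^2 := by simp only [sp]; linarith
    simp only [hyp, Fin.cons_zero]
    rw [← this, Real.sqrt_sq hp0.le]
  set x₀ := sp p
  have hT : 0 < hyp s x₀ 0 := hyp_pos hs x₀
  have hS : 0 ≤ ∑ a, (x₀ a)^2 := by positivity
  have hsT : s ≤ hyp s x₀ 0 := Real.le_sqrt_of_sq_le (by linarith)
  have hrT : rad x₀ ≤ hyp s x₀ 0 := Real.sqrt_le_sqrt (by nlinarith)
  have hr0 : 0 ≤ rad x₀ := Real.sqrt_nonneg _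
  have main := averaged_bound (W := boosted s u) ?_ ?_ x₀ hT
    (fun y hy => pointwise_bound hs hu x₀ hy)
  · simp only [Fintype.sum_option, Fintype.sum_sum_type, Fintype.sum_prod_type, boosted] at main
    rw [← add_assoc] at main
    change _ ≤ _ * (L2f s u + (∑ a : Fin 3, L2f s (Lb a u))
                  + ∑ a : Fin 3, ∑ b : Fin 3, L2f s (Lb a (Lb b u))) at main
    rw [hpx]
    set S := L2f s u + (∑ a : Fin 3, L2f s (Lb a u))
                  + ∑ a : Fin 3, ∑ b : Fin 3, L2f s (Lb a (Lb b u)) with hS_def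
    change (s + rad x₀) ^ ((3:ℝ)/2) * _ ≤ _
    set T := hyp s x₀ 0
    have hS0 : 0 ≤ S := by
      have n : ∀ w, 0 ≤ L2f s w := fun w => Real.sqrt_nonneg _
      exact add_nonneg (add_nonneg (n _) (Finset.sum_nonneg fun _ _ => n _))
        (Finset.sum_nonneg fun _ _ => Finset.sum_nonneg fun _ _ => n _)
    have h4 : (4 * T) ^ ((3:ℝ)/2) = 8 * T ^ ((3:ℝ)/2) := by
      rw [Real.mul_rpow (by norm_num) hT.le]
      congr 1
      rw [show (4:ℝ) = 2 ^ (2:ℝ) by norm_num, ← Real.rpow_mul (by norm_num)]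
      norm_num
    have hcancel : T ^ ((3:ℝ)/2) * T ^ (-(3:ℝ)/2) = 1 := by
      rw [← Real.rpow_add hT]; norm_num
    calc _ ≤ (4 * T) ^ ((3:ℝ)/2) * (4096 * T ^ (-(3:ℝ)/2) * S) := by
          gcongr
          linarith
      _ = 8 * 4096 * (T ^ ((3:ℝ)/2) * T ^ (-(3:ℝ)/2)) * S := by rw [h4]; ring
      _ ≤ _ := by rw [hcancel]; linarith
  · have hc : ∀ {w : (Fin 4 → ℝ) → ℝ}, ContDiff ℝ (⊤ : ℕ∞) w →
        Continuous fun x => w (hyp s x) := fun h => h.continuous.comp (continuous_hyp s)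
    rintro (_ | a | ⟨a, b⟩)
    · exact hc hu
    · exact hc (contDiff_Lb a hu)
    · exact hc (contDiff_Lb a (contDiff_Lb b hu))
  · rintro (_ | a | ⟨a, b⟩)
    · exact hasCompactSupport_hyp s hsupp
    · exact hasCompactSupport_hyp s (suppK_Lb a hsupp)
    · exact hasCompactSupport_hyp s (suppK_Lb a (suppK_Lb b hsupp))
end
end

section
/- There is a universal constant C > 0 such that for every s ≥ 2 and every sufficiently smooth function u defined in K_{[2,s]} and spatially compactly supported in K: ‖ s⁻¹ u ‖_{L²_f(H_s)} ≤ C ( ‖u‖_{L²_f(H_2)} + Σ_{a=1}^3 ‖∂̲_a u‖_{L²_f(H_s)} + Σ_{a=1}^3 ∫_2^s s̄⁻¹ ( ‖∂̲_a u‖_{L²_f(H_{s̄})} + ‖(s̄/t) ∂_a u‖_{L²_f(H_{s̄})} ) ds̄ ). -/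
/-! The idea is to split `1 = r²/t² + s²/t²` on `H_s`, where `t² = s² + r²`, so that
`‖s⁻¹u‖² = ‖(r/t) s⁻¹ u‖² + ‖t⁻¹u‖²`.

The second term lives on the single hyperboloid `H_s`, parametrised by `x ∈ ℝ³`; there `∂̲_a` is the
ordinary derivative in `x^a`, and `hardy_on_hyperboloid` bounds it by `2 Σ_a ‖∂̲_a u‖` through an
integration by parts against `x/t²`.

For the first term, one differentiates its square in the hyperbolic time `σ` at fixed `x`, where
`∂_σ` is `(σ/t)∂_t`. The derivative of the weight `(r/(tσ))²` is nonpositive and is dropped. In the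
remaining term the factor `r²/t²` gives `(r²/t)∂_t u = Σ_a x^a (∂̲_a u - ∂_a u)`, and Cauchy–Schwarz
leads to `F' ≤ 2 √F σ⁻¹ Σ_a (‖∂̲_a u‖ + ‖(σ/t)∂_a u‖)` for `F = ‖(r/t) σ⁻¹ u‖²`, which is integrated
from `2` to `s` in `weighted_growth`.

All integrands are jointly continuous in `(σ, x)` and, for `σ` in a compact set, supported in a fixed
ball, because `|x| ≤ t - 1` on `H_σ` forces `1 + 2|x| ≤ σ²` (the predicate `Good`). This justifies
integrability and differentiation under the integral sign. -/

noncomputable section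

open MeasureTheory Real

open Set Filter Topology

/-! ### Parametric integrals over the foliation -/

/-- A function of the hyperbolic time `σ` and of `x ∈ ℝ³` that is jointly continuous for `σ > 0` and
vanishes for `σ² < 1 + 2‖x‖`. As `rad x ≥ ‖x‖` (sup norm), the latter holds for the pullback to the
hyperboloids of every function supported in `{|x| ≤ t - 1}`. -/
structure Good (W : ℝ → (Fin 3 → ℝ) → ℝ) : Prop where
  cont : ContinuousOn (fun q : ℝ × (Fin 3 → ℝ) => W q.1 q.2) {q | 0 < q.1}
  supp : ∀ σ x, 0 < σ → σ ^ 2 < 1 + 2 * ‖x‖ → W σ x = 0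

lemma Good.mul_left {A W : ℝ → (Fin 3 → ℝ) → ℝ} (hW : Good W)
    (hA : ContinuousOn (fun q : ℝ × (Fin 3 → ℝ) => A q.1 q.2) {q | 0 < q.1}) :
    Good (fun σ x => A σ x * W σ x) :=
  ⟨hA.mul hW.cont, fun σ x h1 h2 => by simp [hW.supp σ x h1 h2]⟩

lemma Good.sq {W : ℝ → (Fin 3 → ℝ) → ℝ} (hW : Good W) : Good (fun σ x => W σ x ^ 2) :=
  ⟨hW.cont.pow 2, fun σ x h1 h2 => by simp [hW.supp σ x h1 h2]⟩

lemma Good.continuous {W : ℝ → (Fin 3 → ℝ) → ℝ} (hW : Good W) {σ : ℝ} (hσ : 0 < σ) :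
    Continuous (W σ) := by
  have : Continuous (fun x : Fin 3 → ℝ => ((σ, x) : ℝ × (Fin 3 → ℝ))) := by fun_prop
  exact hW.cont.comp_continuous this (fun x => hσ)

/-- A common integrable majorant for the slices near a given positive time. -/
lemma Good.exists_bound {W : ℝ → (Fin 3 → ℝ) → ℝ} (hW : Good W) {σ₀ : ℝ} (hσ : 0 < σ₀) :
    ∃ b : (Fin 3 → ℝ) → ℝ, Integrable b ∧
      ∀ σ ∈ Icc (σ₀ / 2) (2 * σ₀), ∀ x, ‖W σ x‖ ≤ b x := by
  set K : Set (Fin 3 → ℝ) := Metric.closedBall 0 (2 * σ₀ ^ 2) with hK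
  have hc : IsCompact (Icc (σ₀ / 2) (2 * σ₀) ×ˢ K) := isCompact_Icc.prod (isCompact_closedBall _ _)
  obtain ⟨M, hM⟩ := hc.exists_bound_of_continuousOn
    (f := fun q : ℝ × (Fin 3 → ℝ) => W q.1 q.2)
    (hW.cont.mono (fun q hq => by
      have := hq.1.1
      show 0 < q.1
      linarith))
  refine ⟨K.indicator (fun _ => M), ?_, fun σ hσ' x => ?_⟩
  · exact (integrable_indicator_iff measurableSet_closedBall).2
      (continuousOn_const.integrableOn_compact (isCompact_closedBall _ _))
  · by_cases hx : x ∈ K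
    · rw [indicator_of_mem hx]
      exact hM (σ, x) ⟨hσ', hx⟩
    · rw [indicator_of_notMem hx, hW.supp σ x (by linarith [hσ'.1]), norm_zero]
      have : 2 * σ₀ ^ 2 < ‖x‖ := by simpa [hK] using hx
      nlinarith [hσ'.1, hσ'.2]

lemma Icc_nhds {σ₀ : ℝ} (hσ : 0 < σ₀) : Icc (σ₀ / 2) (2 * σ₀) ∈ 𝓝 σ₀ :=
  Icc_mem_nhds (by linarith) (by linarith)

lemma Good.integrable {W : ℝ → (Fin 3 → ℝ) → ℝ} (hW : Good W) {σ : ℝ} (hσ : 0 < σ) :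
    Integrable (W σ) := by
  obtain ⟨b, hb, hb'⟩ := hW.exists_bound hσ
  exact hb.mono' (hW.continuous hσ).aestronglyMeasurable
    (ae_of_all _ (hb' σ (mem_of_mem_nhds (Icc_nhds hσ))))

lemma Good.continuousAt_integral {W : ℝ → (Fin 3 → ℝ) → ℝ} (hW : Good W) {σ₀ : ℝ} (hσ : 0 < σ₀) :
    ContinuousAt (fun σ => ∫ x, W σ x) σ₀ := by
  obtain ⟨b, hb, hb'⟩ := hW.exists_bound hσ
  refine continuousAt_of_dominated (bound := b) ?_ ?_ hb (ae_of_all _ fun x => ?_)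
  · filter_upwards [lt_mem_nhds hσ] with σ h
    exact (hW.continuous h).aestronglyMeasurable
  · filter_upwards [Icc_nhds hσ] with σ h
    exact ae_of_all _ (hb' σ h)
  · have h1 : ContinuousAt (fun q : ℝ × (Fin 3 → ℝ) => W q.1 q.2) (σ₀, x) :=
      hW.cont.continuousAt ((isOpen_lt continuous_const continuous_fst).mem_nhds hσ)
    exact ContinuousAt.comp (f := fun σ : ℝ => (σ, x)) (x := σ₀) h1 (by fun_prop)

lemma Good.hasDerivAt_integral {W W' : ℝ → (Fin 3 → ℝ) → ℝ} (hW : Good W) (hW' : Good W')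
    (hd : ∀ σ x, 0 < σ → HasDerivAt (fun τ => W τ x) (W' σ x) σ) {σ₀ : ℝ} (hσ : 0 < σ₀) :
    HasDerivAt (fun σ => ∫ x, W σ x) (∫ x, W' σ₀ x) σ₀ := by
  obtain ⟨b, hb, hb'⟩ := hW'.exists_bound hσ
  refine (hasDerivAt_integral_of_dominated_loc_of_deriv_le (Icc_nhds hσ) ?_ (hW.integrable hσ)
    (hW'.continuous hσ).aestronglyMeasurable (ae_of_all _ fun x σ h => hb' σ h x) hb
    (ae_of_all _ fun x σ h => hd σ x (by linarith [h.1]))).2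
  filter_upwards [lt_mem_nhds hσ] with σ h
  exact (hW.continuous h).aestronglyMeasurable

/-- Cauchy–Schwarz for a product that is only controlled from above by `|f| |g|`. -/
lemma integral_le_sqrt_mul_sqrt {f g P : (Fin 3 → ℝ) → ℝ} (hf : Integrable (fun x => f x ^ 2))
    (hg : Integrable (fun x => g x ^ 2)) (hP : Integrable P) (h : ∀ x, |P x| ≤ |f x| * |g x|) :
    ∫ x, P x ≤ √(∫ x, f x ^ 2) * √(∫ x, g x ^ 2) := by
  have hA : 0 ≤ ∫ x, f x ^ 2 := integral_nonneg fun x => sq_nonneg _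
  have key : ∀ l : ℝ, 0 ≤ (∫ x, f x ^ 2) * (l * l) + (2 * ∫ x, P x) * l + ∫ x, g x ^ 2 := by
    intro l
    have : (∫ x, f x ^ 2) * (l * l) + (2 * ∫ x, P x) * l + ∫ x, g x ^ 2
        = ∫ x, (f x ^ 2 * (l * l) + P x * (2 * l) + g x ^ 2) := by
      rw [integral_add (f := fun x => f x ^ 2 * (l * l) + P x * (2 * l))
        ((hf.mul_const _).add (hP.mul_const _)) hg,
        integral_add (hf.mul_const _) (hP.mul_const _), integral_mul_const, integral_mul_const]
      ring
    rw [this]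
    refine integral_nonneg fun x => ?_
    have h1 : |P x * l| ≤ |f x| * |g x| * |l| := by
      rw [abs_mul]; exact mul_le_mul_of_nonneg_right (h x) (abs_nonneg l)
    have h2 := (abs_le.1 h1).1
    have h3 : 0 ≤ (|f x| * |l| - |g x|) ^ 2 := sq_nonneg _
    have h4 : (|f x| * |l| - |g x|) ^ 2
        = f x ^ 2 * (l * l) + g x ^ 2 - 2 * (|f x| * |g x| * |l|) := by
      rw [← sq_abs (f x), ← sq_abs (g x), ← abs_mul_abs_self l]; ring
    show 0 ≤ f x ^ 2 * (l * l) + P x * (2 * l) + g x ^ 2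
    nlinarith
  have hd := discrim_le_zero key
  unfold discrim at hd
  rw [← Real.sqrt_mul hA]
  exact Real.le_sqrt_of_sq_le (by nlinarith)

/-! ### Geometry of the hyperboloids -/

/-- The time coordinate `√(σ² + |x|²)` of the point of `H_σ` above `x`. -/
def tm (σ : ℝ) (x : Fin 3 → ℝ) : ℝ := √(σ ^ 2 + ∑ a, x a ^ 2)

lemma hyp_zero (σ : ℝ) (x : Fin 3 → ℝ) : hyp σ x 0 = tm σ x := rfl

lemma hyp_succ (σ : ℝ) (x : Fin 3 → ℝ) (a : Fin 3) : hyp σ x a.succ = x a := rfl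

lemma sumsq_nonneg (x : Fin 3 → ℝ) : 0 ≤ ∑ a, x a ^ 2 := Finset.sum_nonneg fun _ _ => sq_nonneg _

lemma tm_pos {σ : ℝ} (hσ : 0 < σ) (x : Fin 3 → ℝ) : 0 < tm σ x :=
  Real.sqrt_pos.2 (by have := sumsq_nonneg x; positivity)

lemma tm_sq (σ : ℝ) (x : Fin 3 → ℝ) : tm σ x ^ 2 = σ ^ 2 + ∑ a, x a ^ 2 :=
  Real.sq_sqrt (by have := sumsq_nonneg x; positivity)

lemma abs_le_tm (σ : ℝ) (x : Fin 3 → ℝ) (a : Fin 3) : |x a| ≤ tm σ x := by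
  refine Real.abs_le_sqrt ?_
  have := Finset.single_le_sum (f := fun a => x a ^ 2) (fun i _ => sq_nonneg _) (Finset.mem_univ a)
  nlinarith [sq_nonneg σ]

lemma le_tm (σ : ℝ) (x : Fin 3 → ℝ) : σ ≤ tm σ x :=
  Real.le_sqrt_of_sq_le (by linarith [sumsq_nonneg x])

lemma continuous_tm : Continuous (fun q : ℝ × (Fin 3 → ℝ) => tm q.1 q.2) := by
  unfold tm; fun_prop

lemma continuous_hyp_s5 : Continuous (fun q : ℝ × (Fin 3 → ℝ) => hyp q.1 q.2) := by
  refine continuous_pi fun i => ?_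
  refine Fin.cases ?_ (fun a => ?_) i
  · exact continuous_tm
  · simp only [hyp_succ]; fun_prop

lemma norm_le_rad (x : Fin 3 → ℝ) : ‖x‖ ≤ rad x := by
  refine (pi_norm_le_iff_of_nonneg (Real.sqrt_nonneg _)).2 fun a => ?_
  refine Real.abs_le_sqrt ?_
  exact Finset.single_le_sum (f := fun a => x a ^ 2) (fun i _ => sq_nonneg _) (Finset.mem_univ a)

lemma good_of_suppK {w : (Fin 4 → ℝ) → ℝ} (hw : ContinuousOn w {p | 0 < p 0}) (hs : SuppK w) :
    Good (fun σ x => w (hyp σ x)) := by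
  refine ⟨hw.comp continuous_hyp_s5.continuousOn fun q hq => tm_pos hq q.2, fun σ x hσ h => hs _ ?_⟩
  have h1 := norm_le_rad x
  have h0 : 0 ≤ rad x := Real.sqrt_nonneg _
  have h2 : rad x ^ 2 = ∑ a, x a ^ 2 := Real.sq_sqrt (sumsq_nonneg x)
  show tm σ x - 1 < rad x
  have : tm σ x < rad x + 1 := by
    rw [tm, Real.sqrt_lt' (by linarith)]
    nlinarith
  linarith

lemma suppK_pd {u : (Fin 4 → ℝ) → ℝ} (hs : SuppK u) (α : Fin 4) : SuppK (pd α u) := by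
  intro p hp
  have ho : IsOpen {p : Fin 4 → ℝ | p 0 - 1 < rad (sp p)} := by
    refine isOpen_lt (by fun_prop) ?_
    unfold rad sp; fun_prop
  have : u =ᶠ[𝓝 p] fun _ => 0 := by
    filter_upwards [ho.mem_nhds hp] with q hq using hs q hq
  rw [pd, this.fderiv_eq]; simp

lemma continuous_pd {u : (Fin 4 → ℝ) → ℝ} (hu : ContDiff ℝ (⊤ : ℕ∞) u) (α : Fin 4) :
    Continuous (pd α u) :=
  (hu.continuous_fderiv (by simp)).clm_apply continuous_const

lemma continuousOn_sdu {u : (Fin 4 → ℝ) → ℝ} (hu : ContDiff ℝ (⊤ : ℕ∞) u) (a : Fin 3) :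
    ContinuousOn (sdu a u) {p | 0 < p 0} := by
  have h0 := continuous_pd hu 0
  have h1 := continuous_pd hu a.succ
  unfold sdu
  refine (ContinuousOn.mul (ContinuousOn.div (by fun_prop) (by fun_prop) fun p hp => ?_)
    h0.continuousOn).add h1.continuousOn
  exact ne_of_gt hp

lemma suppK_sdu {u : (Fin 4 → ℝ) → ℝ} (hs : SuppK u) (a : Fin 3) : SuppK (sdu a u) := fun p hp => by
  simp [sdu, suppK_pd hs 0 p hp, suppK_pd hs a.succ p hp]

lemma hasDerivAt_tm_time {σ : ℝ} (hσ : 0 < σ) (x : Fin 3 → ℝ) :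
    HasDerivAt (fun τ => tm τ x) (σ / tm σ x) σ := by
  have h := ((hasDerivAt_pow 2 σ).add_const (∑ a, x a ^ 2)).sqrt
    (by have := sumsq_nonneg x; positivity)
  refine HasDerivAt.congr_deriv h ?_
  have := tm_pos hσ x
  change _ / (2 * tm σ x) = _
  field_simp
  norm_num

/-- Along the parametrisation of the foliation by `(σ, x)`, the derivative in `σ` is
`(σ/t) ∂_t`. -/
lemma hasDerivAt_time {u : (Fin 4 → ℝ) → ℝ} (hu : ContDiff ℝ (⊤ : ℕ∞) u) {σ : ℝ} (hσ : 0 < σ)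
    (x : Fin 3 → ℝ) :
    HasDerivAt (fun τ => u (hyp τ x)) (σ / tm σ x * pd 0 u (hyp σ x)) σ := by
  have hc : HasDerivAt (fun τ => hyp τ x) ((σ / tm σ x) • Pi.single (0 : Fin 4) (1 : ℝ)) σ := by
    refine hasDerivAt_pi.2 fun i => ?_
    refine Fin.cases ?_ (fun a => ?_) i
    · simpa [hyp_zero] using hasDerivAt_tm_time hσ x
    · simpa [hyp_succ] using hasDerivAt_const σ (x a)
  have hd := ((hu.differentiable (by simp)) (hyp σ x)).hasFDerivAt.comp_hasDerivAt σ hc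
  refine HasDerivAt.congr_deriv hd ?_
  simp [pd]

lemma hasDerivAt_sumsq_line (x : Fin 3 → ℝ) (a : Fin 3) :
    HasDerivAt (fun h : ℝ => ∑ b, (x + h • (Pi.single a (1 : ℝ) : Fin 3 → ℝ)) b ^ 2) (2 * x a) 0 := by
  have : ∀ b ∈ Finset.univ, HasDerivAt (fun h : ℝ => (x + h • (Pi.single a (1 : ℝ) : Fin 3 → ℝ)) b ^ 2)
      (if b = a then 2 * x a else 0) 0 := by
    intro b _
    have h1 : HasDerivAt (fun h : ℝ => (x + h • (Pi.single a (1 : ℝ) : Fin 3 → ℝ)) b)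
        ((Pi.single a (1 : ℝ) : Fin 3 → ℝ) b) 0 := by
      have := ((hasDerivAt_id (0 : ℝ)).mul_const ((Pi.single a (1 : ℝ) : Fin 3 → ℝ) b)).const_add (x b)
      simpa using this
    refine (h1.pow 2).congr_deriv ?_
    by_cases hb : b = a
    · subst hb; simp
    · simp [hb]
  refine (HasDerivAt.fun_sum this).congr_deriv ?_
  simp

lemma hasDerivAt_tm_line {σ : ℝ} (hσ : 0 < σ) (x : Fin 3 → ℝ) (a : Fin 3) :
    HasDerivAt (fun h : ℝ => tm σ (x + h • (Pi.single a (1 : ℝ) : Fin 3 → ℝ))) (x a / tm σ x) 0 := by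
  have h := ((hasDerivAt_sumsq_line x a).const_add (σ ^ 2)).sqrt
    (by have := sumsq_nonneg (x + (0 : ℝ) • (Pi.single a (1 : ℝ) : Fin 3 → ℝ)); positivity)
  refine HasDerivAt.congr_deriv h ?_
  have := tm_pos hσ x
  have e : √(σ ^ 2 + ∑ b, (x + (0 : ℝ) • (Pi.single a (1 : ℝ) : Fin 3 → ℝ)) b ^ 2) = tm σ x := by simp [tm]
  rw [e]
  field_simp

/-- On a fixed hyperboloid, parametrised by `x`, the derivative in `x^a` is the
semi-hyperboloidal derivative. -/
lemma hasLineDerivAt_space {u : (Fin 4 → ℝ) → ℝ} (hu : ContDiff ℝ (⊤ : ℕ∞) u) {σ : ℝ} (hσ : 0 < σ)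
    (x : Fin 3 → ℝ) (a : Fin 3) :
    HasLineDerivAt ℝ (fun y => u (hyp σ y)) (sdu a u (hyp σ x)) x (Pi.single a 1) := by
  have hc : HasDerivAt (fun h : ℝ => hyp σ (x + h • (Pi.single a (1 : ℝ) : Fin 3 → ℝ)))
      ((x a / tm σ x) • Pi.single (0 : Fin 4) (1 : ℝ) + Pi.single a.succ (1 : ℝ)) 0 := by
    refine hasDerivAt_pi.2 fun i => ?_
    refine Fin.cases ?_ (fun b => ?_) i
    · simpa [hyp_zero] using hasDerivAt_tm_line hσ x a
    · have := ((hasDerivAt_id (0 : ℝ)).mul_const ((Pi.single a (1 : ℝ) : Fin 3 → ℝ) b)).const_add (x b)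
      have e : (Pi.single a.succ (1 : ℝ) : Fin 4 → ℝ) b.succ = (Pi.single a (1 : ℝ) : Fin 3 → ℝ) b := by
        simp [Pi.single_apply]
      simpa [hyp_succ, e] using this
  have hd := ((hu.differentiable (by simp))
    (hyp σ (x + (0 : ℝ) • (Pi.single a (1 : ℝ) : Fin 3 → ℝ)))).hasFDerivAt.comp_hasDerivAt (0 : ℝ) hc
  refine HasDerivAt.congr_deriv hd ?_
  simp [pd, sdu, hyp_zero, hyp_succ]

lemma L2f_def (σ : ℝ) (w : (Fin 4 → ℝ) → ℝ) : L2f σ w = √(∫ x, w (hyp σ x) ^ 2) := rfl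

lemma good_inv_tm_mul {W : ℝ → (Fin 3 → ℝ) → ℝ} (hW : Good W) {n : ℕ} :
    Good (fun σ x => (tm σ x ^ n)⁻¹ * W σ x) :=
  hW.mul_left (ContinuousOn.inv₀ (continuous_tm.pow n).continuousOn
    fun q hq => (pow_pos (tm_pos hq q.2) n).ne')

lemma sqrt_add_le {a b : ℝ} (ha : 0 ≤ a) (hb : 0 ≤ b) : √(a + b) ≤ √a + √b := by
  rw [Real.sqrt_le_left (by positivity)]
  nlinarith [Real.sq_sqrt ha, Real.sq_sqrt hb, mul_nonneg (Real.sqrt_nonneg a) (Real.sqrt_nonneg b)]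

/-! ### Hardy's inequality on a single hyperboloid -/

/-- Hardy's inequality on a hyperboloid with the regular weight `1/t`. It follows by integrating by
parts against the vector field `x/t²`, whose divergence `3/t² - 2|x|²/t⁴` is at least `1/t²`. -/
lemma hardy_on_hyperboloid {u : (Fin 4 → ℝ) → ℝ} (hu : ContDiff ℝ (⊤ : ℕ∞) u) (hs : SuppK u)
    {σ : ℝ} (hσ : 0 < σ) :
    √(∫ x, ((tm σ x)⁻¹ * u (hyp σ x)) ^ 2) ≤ 2 * ∑ a, L2f σ (sdu a u) := by
  have hV : Good (fun σ x => u (hyp σ x)) := good_of_suppK hu.continuous.continuousOn hs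
  have hS : ∀ a, Good (fun σ x => sdu a u (hyp σ x)) := fun a =>
    good_of_suppK (continuousOn_sdu hu a) (suppK_sdu hs a)
  set H := ∫ x, ((tm σ x)⁻¹ * u (hyp σ x)) ^ 2 with hH
  have hVt : Good (fun σ x => (tm σ x)⁻¹ * u (hyp σ x)) := by
    simpa using good_inv_tm_mul hV (n := 1)
  -- the divergence of `x/t²`, one summand at a time
  have hA : ∀ a : Fin 3, Good (fun σ x =>
      ((tm σ x ^ 2 - 2 * x a ^ 2) * (tm σ x ^ 4)⁻¹) * u (hyp σ x) ^ 2) := fun a => by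
    refine hV.sq.mul_left (ContinuousOn.mul ?_ (ContinuousOn.inv₀
      (continuous_tm.pow 4).continuousOn fun q hq => (pow_pos (tm_pos hq q.2) 4).ne'))
    have := continuous_tm
    fun_prop
  have hB : ∀ a : Fin 3, Good (fun σ x =>
      (x a * (tm σ x ^ 2)⁻¹) * (2 * u (hyp σ x) * sdu a u (hyp σ x))) := fun a => by
    have h1 : Good (fun σ x => (2 * u (hyp σ x)) * sdu a u (hyp σ x)) :=
      (hS a).mul_left (continuousOn_const.mul hV.cont)
    refine h1.mul_left (ContinuousOn.mul (by fun_prop) (ContinuousOn.inv₀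
      (continuous_tm.pow 2).continuousOn fun q hq => (pow_pos (tm_pos hq q.2) 2).ne'))
  have hC : ∀ a : Fin 3, Good (fun σ x => (x a * (tm σ x ^ 2)⁻¹) * u (hyp σ x) ^ 2) := fun a => by
    refine hV.sq.mul_left (ContinuousOn.mul (by fun_prop) (ContinuousOn.inv₀
      (continuous_tm.pow 2).continuousOn fun q hq => (pow_pos (tm_pos hq q.2) 2).ne'))
  have ibp : ∀ a : Fin 3, ∫ x, (x a * (tm σ x ^ 2)⁻¹) * (2 * u (hyp σ x) * sdu a u (hyp σ x))
      = - ∫ x, ((tm σ x ^ 2 - 2 * x a ^ 2) * (tm σ x ^ 4)⁻¹) * u (hyp σ x) ^ 2 := by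
    intro a
    refine integral_bilinear_hasLineDerivAt_right_eq_neg_left_of_integrable
      (B := ContinuousLinearMap.mul ℝ ℝ) (v := Pi.single a (1 : ℝ))
      (f := fun x => x a * (tm σ x ^ 2)⁻¹) (g := fun x => u (hyp σ x) ^ 2)
      ((hA a).integrable hσ) ((hB a).integrable hσ) ((hC a).integrable hσ) (fun x _ => ?_)
      (fun x _ => ?_)
    · have hx : HasDerivAt (fun h : ℝ => (x + h • (Pi.single a (1 : ℝ) : Fin 3 → ℝ)) a) 1 0 := by
        simpa using (hasDerivAt_id (0 : ℝ)).const_add (x a)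
      have ht := hasDerivAt_tm_line hσ x a
      have hp := tm_pos hσ x
      have := hx.mul ((ht.pow 2).inv (by simpa using hp.ne'))
      refine HasDerivAt.congr_deriv this ?_
      simp
      field_simp
      ring
    · exact HasDerivAt.congr_deriv ((hasLineDerivAt_space hu hσ x a).pow 2) (by simp)
  have hcs : ∀ a : Fin 3, ∫ x, ((tm σ x ^ 2 - 2 * x a ^ 2) * (tm σ x ^ 4)⁻¹) * u (hyp σ x) ^ 2
      ≤ √H * (2 * L2f σ (sdu a u)) := by
    intro a
    have h1 : ∫ x, (-(2⁻¹ : ℝ)) * ((x a * (tm σ x ^ 2)⁻¹) * (2 * u (hyp σ x) * sdu a u (hyp σ x)))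
        ≤ √H * L2f σ (sdu a u) := by
      refine integral_le_sqrt_mul_sqrt (hVt.sq.integrable hσ) ((hS a).sq.integrable hσ)
        (((hB a).integrable hσ).const_mul _) fun x => ?_
      have hp := tm_pos hσ x
      have e : (-(2⁻¹ : ℝ)) * ((x a * (tm σ x ^ 2)⁻¹) * (2 * u (hyp σ x) * sdu a u (hyp σ x)))
          = -((x a / tm σ x) * (((tm σ x)⁻¹ * u (hyp σ x)) * sdu a u (hyp σ x))) := by
        field_simp
      rw [e, abs_neg, abs_mul (x a / tm σ x), abs_mul ((tm σ x)⁻¹ * _)]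
      have : |x a / tm σ x| ≤ 1 := by
        rw [abs_div, abs_of_pos hp]
        exact div_le_one_of_le₀ (abs_le_tm σ x a) hp.le
      exact mul_le_of_le_one_left (by positivity) this
    rw [integral_const_mul, ibp a] at h1
    linarith
  have hle : H ≤ √H * (2 * ∑ a, L2f σ (sdu a u)) := by
    calc H ≤ ∫ x, ∑ a : Fin 3,
          ((tm σ x ^ 2 - 2 * x a ^ 2) * (tm σ x ^ 4)⁻¹) * u (hyp σ x) ^ 2 := by
          refine integral_mono (hVt.sq.integrable hσ)
            (integrable_finsetSum _ fun a _ => (hA a).integrable hσ) fun x => ?_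
          have hp := tm_pos hσ x
          have h2 := tm_sq σ x
          simp only [Fin.sum_univ_three] at h2 ⊢
          have e : ((tm σ x ^ 2 - 2 * x 0 ^ 2) * (tm σ x ^ 4)⁻¹) * u (hyp σ x) ^ 2
              + ((tm σ x ^ 2 - 2 * x 1 ^ 2) * (tm σ x ^ 4)⁻¹) * u (hyp σ x) ^ 2
              + ((tm σ x ^ 2 - 2 * x 2 ^ 2) * (tm σ x ^ 4)⁻¹) * u (hyp σ x) ^ 2
              - ((tm σ x)⁻¹ * u (hyp σ x)) ^ 2
              = (2 * σ ^ 2) * (tm σ x ^ 4)⁻¹ * u (hyp σ x) ^ 2 := by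
            have : σ ^ 2 = tm σ x ^ 2 - (x 0 ^ 2 + x 1 ^ 2 + x 2 ^ 2) := by linarith
            rw [this]
            field_simp
            ring
          have : 0 ≤ (2 * σ ^ 2) * (tm σ x ^ 4)⁻¹ * u (hyp σ x) ^ 2 := by positivity
          linarith
      _ = ∑ a : Fin 3, ∫ x, ((tm σ x ^ 2 - 2 * x a ^ 2) * (tm σ x ^ 4)⁻¹) * u (hyp σ x) ^ 2 :=
          integral_finsetSum _ fun a _ => (hA a).integrable hσ
      _ ≤ ∑ a : Fin 3, √H * (2 * L2f σ (sdu a u)) := Finset.sum_le_sum fun a _ => hcs a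
      _ = √H * (2 * ∑ a, L2f σ (sdu a u)) := by simp only [Finset.mul_sum]
  have hH0 : 0 ≤ H := integral_nonneg fun x => sq_nonneg _
  rcases hH0.eq_or_lt with h0 | h0
  · rw [← h0, Real.sqrt_zero]
    exact mul_nonneg zero_le_two (Finset.sum_nonneg fun a _ => Real.sqrt_nonneg _)
  · have hp := Real.sqrt_pos.2 h0
    refine le_of_mul_le_mul_left ?_ hp
    rwa [Real.mul_self_sqrt hH0]

/-! ### Growth of the weighted norm along the foliation -/

/-- A differential inequality `F' ≤ 2 √F Φ` integrates to `√F(b) ≤ √F(a) + ∫ Φ`. Since `√` is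
singular at `0`, one differentiates `√(F + ε²)` and lets `ε` tend to `0`. -/
lemma sqrt_le_of_deriv_le {F F' Φ : ℝ → ℝ} {a b : ℝ} (hab : a ≤ b) (hF0 : ∀ σ, 0 ≤ F σ)
    (hF : ∀ σ ∈ Icc a b, HasDerivAt F (F' σ) σ) (hΦ : ContinuousOn Φ (Icc a b))
    (hΦ0 : ∀ σ, 0 ≤ σ → 0 ≤ Φ σ) (ha : 0 ≤ a)
    (h : ∀ σ ∈ Icc a b, F' σ ≤ 2 * √(F σ) * Φ σ) :
    √(F b) ≤ √(F a) + ∫ σ in a..b, Φ σ := by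
  refine le_of_forall_pos_le_add fun ε hε => ?_
  have hpos : ∀ σ, 0 < F σ + ε ^ 2 := fun σ => by have := hF0 σ; positivity
  have hd : ∀ σ ∈ Icc a b,
      HasDerivAt (fun σ => √(F σ + ε ^ 2)) (F' σ / (2 * √(F σ + ε ^ 2))) σ := fun σ hσ =>
    ((hF σ hσ).add_const _).sqrt (hpos σ).ne'
  have key := intervalIntegral.sub_le_integral_of_hasDeriv_right_of_le (φ := Φ) hab
    (fun σ hσ => (hd σ hσ).continuousAt.continuousWithinAt)
    (fun σ hσ => (hd σ (Ioo_subset_Icc_self hσ)).hasDerivWithinAt)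
    (hΦ.integrableOn_compact isCompact_Icc) (fun σ hσ => by
      have hp := Real.sqrt_pos.2 (hpos σ)
      rw [div_le_iff₀ (by positivity)]
      refine (h σ (Ioo_subset_Icc_self hσ)).trans ?_
      have h1 : √(F σ) ≤ √(F σ + ε ^ 2) := Real.sqrt_le_sqrt (by nlinarith)
      have h2 := hΦ0 σ (ha.trans hσ.1.le)
      nlinarith [mul_le_mul_of_nonneg_right h1 h2])
  have h1 : √(F b) ≤ √(F b + ε ^ 2) := Real.sqrt_le_sqrt (by nlinarith)
  have h2 : √(F a + ε ^ 2) ≤ √(F a) + ε := by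
    rw [Real.sqrt_le_left (by positivity)]
    nlinarith [Real.sq_sqrt (hF0 a), Real.sqrt_nonneg (F a)]
  linarith

/-- The growth in `σ` of the norm of `(r/t) u / σ`. The weight `r/t` turns the unfavourable
derivative `∂_t` into a combination of `∂̲_a` and `∂_a`. -/
lemma weighted_growth {u : (Fin 4 → ℝ) → ℝ} (hu : ContDiff ℝ (⊤ : ℕ∞) u) (hs : SuppK u)
    {s : ℝ} (h2s : 2 ≤ s) :
    √(∫ x, (√(∑ a, x a ^ 2) * (tm s x * s)⁻¹ * u (hyp s x)) ^ 2)
      ≤ √(∫ x, (√(∑ a, x a ^ 2) * (tm 2 x * 2)⁻¹ * u (hyp 2 x)) ^ 2)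
        + ∑ a : Fin 3, ∫ t in (2:ℝ)..s,
            t⁻¹ * (L2f t (sdu a u) + L2f t (fun p => (t / p 0) * pd a.succ u p)) := by
  have hV : Good (fun σ x => u (hyp σ x)) := good_of_suppK hu.continuous.continuousOn hs
  have hP : ∀ α, Good (fun σ x => pd α u (hyp σ x)) := fun α =>
    good_of_suppK (continuous_pd hu α).continuousOn (suppK_pd hs α)
  have hS : ∀ a, Good (fun σ x => sdu a u (hyp σ x)) := fun a =>
    good_of_suppK (continuousOn_sdu hu a) (suppK_sdu hs a)
  have ct := continuous_tm
  have hQ : ∀ a : Fin 3, Good (fun σ x => (σ / tm σ x) * pd a.succ u (hyp σ x)) := fun a =>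
    (hP _).mul_left (continuous_fst.continuousOn.div ct.continuousOn
      fun q hq => (tm_pos hq q.2).ne')
  have hti : ContinuousOn (fun q : ℝ × (Fin 3 → ℝ) => (tm q.1 q.2)⁻¹) {q | 0 < q.1} :=
    ct.continuousOn.inv₀ fun q hq => (tm_pos hq q.2).ne'
  have hsi : ContinuousOn (fun q : ℝ × (Fin 3 → ℝ) => q.1⁻¹) {q | 0 < q.1} :=
    continuous_fst.continuousOn.inv₀ fun q hq => (ne_of_gt hq)
  have hf : Good (fun σ x => (√(∑ a, x a ^ 2) * (tm σ x * σ)⁻¹) * u (hyp σ x)) := by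
    refine hV.mul_left (ContinuousOn.mul (by fun_prop) ?_)
    simp only [mul_inv]
    exact hti.mul hsi
  -- `W'` is the `σ`-derivative of the square of the weighted function
  set W' : ℝ → (Fin 3 → ℝ) → ℝ := fun σ x =>
    2 * (∑ a, x a ^ 2) * ((tm σ x)⁻¹ ^ 3 * σ⁻¹) * pd 0 u (hyp σ x) * u (hyp σ x)
    - 2 * (∑ a, x a ^ 2) * ((tm σ x)⁻¹ ^ 4 * σ⁻¹ + (tm σ x)⁻¹ ^ 2 * σ⁻¹ ^ 3) * u (hyp σ x)
      * u (hyp σ x) with hW'def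
  have hW' : Good W' := by
    have h1 : Good (fun σ x => (2 * (∑ a, x a ^ 2) * ((tm σ x)⁻¹ ^ 3 * σ⁻¹) * pd 0 u (hyp σ x)
      - 2 * (∑ a, x a ^ 2) * ((tm σ x)⁻¹ ^ 4 * σ⁻¹ + (tm σ x)⁻¹ ^ 2 * σ⁻¹ ^ 3) * u (hyp σ x))
        * u (hyp σ x)) := by
      refine hV.mul_left ?_
      have cr : ContinuousOn (fun q : ℝ × (Fin 3 → ℝ) => 2 * ∑ a, q.2 a ^ 2) {q | 0 < q.1} :=
        Continuous.continuousOn (by fun_prop)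
      exact ((cr.mul ((hti.pow 3).mul hsi)).mul (hP 0).cont).sub
        ((cr.mul (((hti.pow 4).mul hsi).add ((hti.pow 2).mul (hsi.pow 3)))).mul hV.cont)
    simpa only [hW'def, sub_mul] using h1
  have hder : ∀ σ x, 0 < σ → HasDerivAt
      (fun τ => ((√(∑ a, x a ^ 2) * (tm τ x * τ)⁻¹) * u (hyp τ x)) ^ 2) (W' σ x) σ := by
    intro σ x hσ
    have hp := tm_pos hσ x
    have d1 := (hasDerivAt_tm_time hσ x).mul (hasDerivAt_id σ)
    have d2 := d1.inv (mul_ne_zero hp.ne' hσ.ne')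
    have d3 := (((d2.const_mul √(∑ a, x a ^ 2)).mul (hasDerivAt_time hu hσ x))).pow 2
    refine HasDerivAt.congr_deriv d3 ?_
    have hr : (∑ a, x a ^ 2) = √(∑ a, x a ^ 2) ^ 2 := (Real.sq_sqrt (sumsq_nonneg x)).symm
    simp only [hW'def, Pi.mul_apply, Pi.inv_apply, id, Nat.add_one_sub_one, pow_one, Nat.cast_ofNat]
    generalize √(∑ a, x a ^ 2) = R at *
    rw [hr]
    field_simp
    ring
  set F : ℝ → ℝ := fun σ => ∫ x, ((√(∑ a, x a ^ 2) * (tm σ x * σ)⁻¹) * u (hyp σ x)) ^ 2 with hF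
  set φ : Fin 3 → ℝ → ℝ := fun a t =>
    t⁻¹ * (L2f t (sdu a u) + L2f t (fun p => (t / p 0) * pd a.succ u p)) with hφ
  have hφc : ∀ a, ContinuousOn (φ a) (Icc 2 s) := by
    intro a σ hσ
    have h0 : 0 < σ := by linarith [hσ.1]
    refine ContinuousAt.continuousWithinAt ?_
    refine (continuousAt_inv₀ h0.ne').mul (ContinuousAt.add ?_ ?_)
    · exact ((hS a).sq.continuousAt_integral h0).sqrt
    · exact ((hQ a).sq.continuousAt_integral h0).sqrt
  have hφi : ∀ a ∈ Finset.univ, IntervalIntegrable (φ a) volume 2 s := fun a _ =>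
    ContinuousOn.intervalIntegrable (by rw [uIcc_of_le h2s]; exact hφc a)
  rw [← intervalIntegral.integral_finsetSum hφi]
  refine sqrt_le_of_deriv_le (F := F) (F' := fun σ => ∫ x, W' σ x) h2s
    (fun σ => integral_nonneg fun x => sq_nonneg _)
    (fun σ hσ => hf.sq.hasDerivAt_integral hW' hder (by linarith [hσ.1]))
    (continuousOn_finsetSum _ fun a _ => hφc a)
    (fun σ hσ => Finset.sum_nonneg fun a _ => mul_nonneg (inv_nonneg.2 hσ)
      (add_nonneg (Real.sqrt_nonneg _) (Real.sqrt_nonneg _))) zero_le_two ?_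
  intro σ hmem
  have hσ : 0 < σ := by linarith [hmem.1]
  -- the two families of products to which Cauchy–Schwarz applies
  have hA : ∀ a : Fin 3, Good (fun σ x =>
      (x a * σ⁻¹ * (tm σ x)⁻¹ ^ 2 * σ * u (hyp σ x)) * sdu a u (hyp σ x)) := fun a => by
    have cx : ContinuousOn (fun q : ℝ × (Fin 3 → ℝ) => q.2 a) {q | 0 < q.1} := by fun_prop
    exact (hS a).mul_left
      ((((cx.mul hsi).mul (hti.pow 2)).mul continuous_fst.continuousOn).mul hV.cont)
  have hB : ∀ a : Fin 3, Good (fun σ x =>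
      (-(x a * σ⁻¹ * (tm σ x)⁻¹ * u (hyp σ x))) * ((σ / tm σ x) * pd a.succ u (hyp σ x))) :=
    fun a => by
      have cx : ContinuousOn (fun q : ℝ × (Fin 3 → ℝ) => q.2 a) {q | 0 < q.1} := by fun_prop
      exact (hQ a).mul_left (((cx.mul hsi).mul hti).mul hV.cont).neg
  have hxa : ∀ (x : Fin 3 → ℝ) (a : Fin 3), |x a| ≤ √(∑ a, x a ^ 2) := fun x a =>
    Real.abs_le_sqrt (Finset.single_le_sum (f := fun a => x a ^ 2)
      (fun i _ => sq_nonneg _) (Finset.mem_univ a))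
  have csA : ∀ a : Fin 3, ∫ x, (x a * σ⁻¹ * (tm σ x)⁻¹ ^ 2 * σ * u (hyp σ x)) * sdu a u (hyp σ x)
      ≤ √(F σ) * L2f σ (sdu a u) := by
    intro a
    refine integral_le_sqrt_mul_sqrt (hf.sq.integrable hσ) ((hS a).sq.integrable hσ)
      ((hA a).integrable hσ) fun x => ?_
    have hp := tm_pos hσ x
    rw [abs_mul]
    refine mul_le_mul_of_nonneg_right ?_ (abs_nonneg _)
    have e : x a * σ⁻¹ * (tm σ x)⁻¹ ^ 2 * σ * u (hyp σ x)
        = (σ / tm σ x) * (x a * ((tm σ x * σ)⁻¹ * u (hyp σ x))) := by field_simp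
    rw [e, abs_mul, abs_mul (x a), mul_assoc √_, abs_mul √_, abs_of_nonneg (Real.sqrt_nonneg _),
      abs_of_nonneg (by positivity : 0 ≤ σ / tm σ x)]
    refine (mul_le_of_le_one_left (by positivity) (div_le_one_of_le₀ (le_tm σ x) hp.le)).trans ?_
    exact mul_le_mul_of_nonneg_right (hxa x a) (abs_nonneg _)
  have csB : ∀ a : Fin 3,
      ∫ x, (-(x a * σ⁻¹ * (tm σ x)⁻¹ * u (hyp σ x))) * ((σ / tm σ x) * pd a.succ u (hyp σ x))
      ≤ √(F σ) * L2f σ (fun p => (σ / p 0) * pd a.succ u p) := by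
    intro a
    refine integral_le_sqrt_mul_sqrt (hf.sq.integrable hσ) ((hQ a).sq.integrable hσ)
      ((hB a).integrable hσ) fun x => ?_
    have hp := tm_pos hσ x
    rw [abs_mul, abs_neg]
    refine mul_le_mul_of_nonneg_right ?_ (abs_nonneg _)
    have e : x a * σ⁻¹ * (tm σ x)⁻¹ * u (hyp σ x)
        = x a * ((tm σ x * σ)⁻¹ * u (hyp σ x)) := by field_simp
    rw [e, abs_mul (x a), mul_assoc √_, abs_mul √_, abs_of_nonneg (Real.sqrt_nonneg _)]
    exact mul_le_mul_of_nonneg_right (hxa x a) (abs_nonneg _)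
  have hAB : ∀ a ∈ (Finset.univ : Finset (Fin 3)), Integrable (fun x : Fin 3 → ℝ =>
      (2 * σ⁻¹) * ((x a * σ⁻¹ * (tm σ x)⁻¹ ^ 2 * σ * u (hyp σ x)) * sdu a u (hyp σ x)
        + (-(x a * σ⁻¹ * (tm σ x)⁻¹ * u (hyp σ x))) * ((σ / tm σ x) * pd a.succ u (hyp σ x)))) :=
    fun a _ => (((hA a).integrable hσ).add ((hB a).integrable hσ)).const_mul _
  calc ∫ x, W' σ x
      ≤ ∫ x, ∑ a : Fin 3,
      (2 * σ⁻¹) * ((x a * σ⁻¹ * (tm σ x)⁻¹ ^ 2 * σ * u (hyp σ x)) * sdu a u (hyp σ x)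
        + (-(x a * σ⁻¹ * (tm σ x)⁻¹ * u (hyp σ x))) * ((σ / tm σ x) * pd a.succ u (hyp σ x))) := by
        refine integral_mono (hW'.integrable hσ) (integrable_finsetSum _ hAB) fun x => ?_
        have hp := tm_pos hσ x
        have e : ∀ a : Fin 3, (2 * σ⁻¹) * ((x a * σ⁻¹ * (tm σ x)⁻¹ ^ 2 * σ * u (hyp σ x))
            * sdu a u (hyp σ x) + (-(x a * σ⁻¹ * (tm σ x)⁻¹ * u (hyp σ x)))
              * ((σ / tm σ x) * pd a.succ u (hyp σ x)))
            = x a ^ 2 * (2 * ((tm σ x)⁻¹ ^ 3 * σ⁻¹) * pd 0 u (hyp σ x) * u (hyp σ x)) := by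
          intro a
          simp only [sdu, hyp_zero, hyp_succ]
          field_simp
          ring
        simp only [e, ← Finset.sum_mul]
        have hn : 0 ≤ 2 * (∑ a, x a ^ 2) * ((tm σ x)⁻¹ ^ 4 * σ⁻¹ + (tm σ x)⁻¹ ^ 2 * σ⁻¹ ^ 3)
            * (u (hyp σ x) * u (hyp σ x)) := by
          have := sumsq_nonneg x
          have := mul_self_nonneg (u (hyp σ x))
          positivity
        simp only [hW'def]
        linarith
    _ = ∑ a : Fin 3, (2 * σ⁻¹) *
        ((∫ x, (x a * σ⁻¹ * (tm σ x)⁻¹ ^ 2 * σ * u (hyp σ x)) * sdu a u (hyp σ x))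
        + ∫ x, (-(x a * σ⁻¹ * (tm σ x)⁻¹ * u (hyp σ x)))
            * ((σ / tm σ x) * pd a.succ u (hyp σ x))) := by
        rw [integral_finsetSum _ hAB]
        refine Finset.sum_congr rfl fun a _ => ?_
        rw [integral_const_mul, integral_add ((hA a).integrable hσ) ((hB a).integrable hσ)]
    _ ≤ ∑ a : Fin 3, 2 * √(F σ) * φ a σ := by
        refine Finset.sum_le_sum fun a _ => ?_
        have e : 2 * √(F σ) * φ a σ = (2 * σ⁻¹) * (√(F σ) * L2f σ (sdu a u)
            + √(F σ) * L2f σ (fun p => (σ / p 0) * pd a.succ u p)) := by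
          simp only [hφ]; ring
        rw [e]
        exact mul_le_mul_of_nonneg_left (add_le_add (csA a) (csB a)) (by positivity)
    _ = 2 * √(F σ) * ∑ a : Fin 3, φ a σ := by rw [Finset.mul_sum]

/-- Proposition 2.3, Hardy-type estimate along the hyperboloidal
foliation: `‖s⁻¹u‖_{L²_f(H_s)} ≲ ‖u‖_{L²_f(H_2)} + Σ_a ‖∂̲_a u‖_{L²_f(H_s)}
+ Σ_a ∫_2^s s̄⁻¹ (‖∂̲_a u‖_{L²_f(H_s̄)} + ‖(s̄/t)∂_a u‖_{L²_f(H_s̄)}) ds̄`. -/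
theorem hardy_type_estimate_hyperboloidal_foliation :
    ∃ C : ℝ, 0 < C ∧
      ∀ s : ℝ, 2 ≤ s →
        ∀ u : (Fin 4 → ℝ) → ℝ, ContDiff ℝ (⊤ : ℕ∞) u → SuppK u →
          L2f s (fun p => u p / s)
            ≤ C * (L2f 2 u + (∑ a : Fin 3, L2f s (sdu a u))
                + ∑ a : Fin 3, ∫ t in (2:ℝ)..s,
                    t⁻¹ * (L2f t (sdu a u) + L2f t (fun p => (t / p 0) * pd a.succ u p))) := by
  refine ⟨2, two_pos, fun s h2s u hu hs => ?_⟩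
  have hs0 : 0 < s := by linarith
  have hV : Good (fun σ x => u (hyp σ x)) := good_of_suppK hu.continuous.continuousOn hs
  have hVt : Good (fun σ x => (tm σ x)⁻¹ * u (hyp σ x)) := by
    simpa using good_inv_tm_mul hV (n := 1)
  have hf : Good (fun σ x => (√(∑ a, x a ^ 2) * (tm σ x * σ)⁻¹) * u (hyp σ x)) := by
    refine hV.mul_left (ContinuousOn.mul (by fun_prop) (ContinuousOn.inv₀
      (continuous_tm.mul continuous_fst).continuousOn
      fun q hq => mul_ne_zero (tm_pos hq q.2).ne' (ne_of_gt hq)))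
  have h1 := weighted_growth hu hs h2s
  have h2 := hardy_on_hyperboloid hu hs hs0
  have h3 : √(∫ x, (√(∑ a, x a ^ 2) * (tm 2 x * 2)⁻¹ * u (hyp 2 x)) ^ 2) ≤ L2f 2 u := by
    refine Real.sqrt_le_sqrt (integral_mono (hf.sq.integrable two_pos)
      (hV.sq.integrable two_pos) fun x => ?_)
    have hp := tm_pos two_pos x
    have hr : √(∑ a, x a ^ 2) ≤ tm 2 x := Real.sqrt_le_sqrt (by norm_num)
    have hq : √(∑ a, x a ^ 2) * (tm 2 x * 2)⁻¹ ≤ 1 := by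
      rw [← div_eq_mul_inv, div_le_one (by positivity)]
      linarith
    show (√(∑ a, x a ^ 2) * (tm 2 x * 2)⁻¹ * u (hyp 2 x)) ^ 2 ≤ u (hyp 2 x) ^ 2
    rw [mul_pow]
    exact mul_le_of_le_one_left (sq_nonneg _) (pow_le_one₀ (by positivity) hq)
  -- the pointwise identity `1 = r²/t² + s²/t²` on `H_s`
  have h4 : L2f s (fun p => u p / s)
      ≤ √(∫ x, (√(∑ a, x a ^ 2) * (tm s x * s)⁻¹ * u (hyp s x)) ^ 2)
        + √(∫ x, ((tm s x)⁻¹ * u (hyp s x)) ^ 2) := by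
    have e : ∫ x, (u (hyp s x) / s) ^ 2
        = (∫ x, (√(∑ a, x a ^ 2) * (tm s x * s)⁻¹ * u (hyp s x)) ^ 2)
          + ∫ x, ((tm s x)⁻¹ * u (hyp s x)) ^ 2 := by
      rw [← integral_add (hf.sq.integrable hs0) (hVt.sq.integrable hs0)]
      refine integral_congr_ae (ae_of_all _ fun x => ?_)
      have hp := tm_pos hs0 x
      have h5 := tm_sq s x
      have h6 := Real.sq_sqrt (sumsq_nonneg x)
      simp only
      generalize √(∑ a, x a ^ 2) = R at *
      rw [← h6] at h5
      field_simp
      rw [h5]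
      ring
    rw [L2f_def, e]
    exact sqrt_add_le (integral_nonneg fun x => sq_nonneg _) (integral_nonneg fun x => sq_nonneg _)
  have h5 : 0 ≤ L2f 2 u := Real.sqrt_nonneg _
  have h6 : 0 ≤ ∑ a : Fin 3, ∫ t in (2:ℝ)..s,
      t⁻¹ * (L2f t (sdu a u) + L2f t (fun p => (t / p 0) * pd a.succ u p)) :=
    Finset.sum_nonneg fun a _ => intervalIntegral.integral_nonneg h2s fun t ht =>
      mul_nonneg (inv_nonneg.2 (by linarith [ht.1]))
        (add_nonneg (Real.sqrt_nonneg _) (Real.sqrt_nonneg _))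
  linarith
end
end
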